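/- (Liouville theorem for subsolutions) Let n ≥ 1, s ∈ (0,1), let K be an admissible kernel, and assume 1 < q ≤ n/(n−2s) if n > 2s, and 1 < q < ∞ if n ≤ 2s. Let u : ℝⁿ → [0,∞) be measurable with u ∈ L^q_loc(ℝⁿ) ∩ L¹_{2s}(ℝⁿ), and suppose u is a weak subsolution of L_K u = −u^q, i.e. ∫_{ℝⁿ} u(x) L_K φ(x) dx ≤ −∫_{ℝⁿ} u(x)^q φ(x) dx for every φ ∈ C_c^∞(ℝⁿ) with φ ≥ 0. Then u = 0 almost everywhere in ℝⁿ. -/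

import Mathlib

open MeasureTheory Metric

noncomputable section

abbrev Euc (n : ℕ) := EuclideanSpace ℝ (Fin n)

def IsAdmissibleKernel (n : ℕ) (s lam Lam : ℝ) (K : Euc n → ℝ) : Prop :=
  0 < lam ∧ lam ≤ Lam ∧ Measurable K ∧
  (∀ z : Euc n, z ≠ 0 → K z = K (-z)) ∧
  (∀ z : Euc n, z ≠ 0 →
    lam * ‖z‖ ^ (-(n : ℝ) - 2 * s) ≤ K z ∧ K z ≤ Lam * ‖z‖ ^ (-(n : ℝ) - 2 * s))

def LK (n : ℕ) (K φ : Euc n → ℝ) (x : Euc n) : ℝ :=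
  (1 / 2) * ∫ z : Euc n, (2 * φ x - φ (x + z) - φ (x - z)) * K z

def IsTestFun (n : ℕ) (φ : Euc n → ℝ) : Prop :=
  ContDiff ℝ (⊤ : ℕ∞) φ ∧ HasCompactSupport φ

def MemL1Tail (n : ℕ) (s : ℝ) (u : Euc n → ℝ) : Prop :=
  LocallyIntegrable u volume ∧
  Integrable (fun x : Euc n => |u x| * (1 + ‖x‖) ^ (-(n : ℝ) - 2 * s)) volume

def MemLqLoc (n : ℕ) (q : ℝ) (u : Euc n → ℝ) : Prop :=
  ∀ R : ℝ, 0 < R → IntegrableOn (fun x : Euc n => u x ^ q) (ball (0 : Euc n) R) volume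

def IsWeakSupersol (n : ℕ) (s q : ℝ) (K u : Euc n → ℝ) : Prop :=
  Measurable u ∧ (∀ x, 0 ≤ u x) ∧ MemLqLoc n q u ∧ MemL1Tail n s u ∧
  ∀ φ : Euc n → ℝ, IsTestFun n φ → (∀ x, 0 ≤ φ x) →
    (∫ x : Euc n, u x ^ q * φ x) ≤ ∫ x : Euc n, u x * LK n K φ x

def IsCutoff (n : ℕ) (η : Euc n → ℝ) : Prop :=
  ContDiff ℝ (⊤ : ℕ∞) η ∧ (∀ x, 0 ≤ η x ∧ η x ≤ 1) ∧
  (∀ x : Euc n, ‖x‖ ≤ 1 → η x = 1) ∧ (∀ x : Euc n, 2 ≤ ‖x‖ → η x = 0)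

def cutoffSq (n : ℕ) (η : Euc n → ℝ) (R : ℝ) : Euc n → ℝ :=
  fun x => (η (R⁻¹ • x)) ^ 2


lemma secdiff_bound {n : ℕ} {η : Euc n → ℝ} (h1 : ContDiff ℝ (⊤ : ℕ∞) η) (h2 : HasCompactSupport η) :
    ∃ C : ℝ, 0 < C ∧ ∀ x z : Euc n, |2 * η x - η (x + z) - η (x - z)| ≤ C * ‖z‖ ^ 2 := by
  have hf : ContDiff ℝ 1 (fderiv ℝ η) := by
    exact (contDiff_infty.1 h1 2).fderiv_right (by norm_num)
  obtain ⟨C, hC⟩ := ContDiff.lipschitzWith_of_hasCompactSupport (h2.fderiv ℝ) hf one_ne_zero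
  refine ⟨C + 1, by positivity, fun x z => ?_⟩
  have hd : Differentiable ℝ η := h1.differentiable (by simp)
  have key := (convex_univ (𝕜 := ℝ) (E := Euc n)).norm_image_sub_le_of_norm_hasFDerivWithin_le
    (f := fun y => η (y + z) - η y) (f' := fun y => fderiv ℝ η (y + z) - fderiv ℝ η y)
    (C := C * ‖z‖) (x := x - z) (y := x) ?_ ?_ trivial trivial
  · have e : 2 * η x - η (x + z) - η (x - z) = -((η (x + z) - η x) - (η (x - z + z) - η (x - z))) := by
      rw [sub_add_cancel]; ring
    rw [e, abs_neg]
    rw [Real.norm_eq_abs, sub_sub_cancel] at key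
    nlinarith [sq_nonneg ‖z‖]
  · intro y _
    apply HasFDerivAt.hasFDerivWithinAt
    apply HasFDerivAt.sub
    · exact (hasFDerivAt_comp_add_right z).2 (hd (y + z)).hasFDerivAt
    · exact (hd y).hasFDerivAt
  · intro y _
    have := hC.dist_le_mul (y + z) y
    rwa [dist_eq_norm, dist_eq_norm, add_sub_cancel_left] at this

lemma ker_integrable {n : ℕ} (hn : 1 ≤ n) {s : ℝ} (hs : s ∈ Set.Ioo (0 : ℝ) 1) (C : ℝ) (hC : 0 < C) :
    Integrable (fun z : Euc n => min (C * ‖z‖ ^ 2) 4 * ‖z‖ ^ (-(n : ℝ) - 2 * s)) volume := by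
  have : Nonempty (Fin n) := ⟨⟨0, hn⟩⟩
  have : Nontrivial (Euc n) := inferInstance
  rw [integrable_fun_norm_addHaar ((volume : Measure (Euc n)))
    (f := fun r : ℝ => min (C * r ^ 2) 4 * r ^ (-(n : ℝ) - 2 * s))]
  have hfr : Module.finrank ℝ (Euc n) = n := by simp
  rw [hfr]
  have e : ∀ r ∈ Set.Ioi (0:ℝ), r ^ (n - 1) • (min (C * r ^ 2) 4 * r ^ (-(n : ℝ) - 2 * s))
      = min (C * r ^ 2) 4 * r ^ (-1 - 2 * s) := by
    intro r hr
    have hr : 0 < r := hr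
    rw [smul_eq_mul, ← Real.rpow_natCast r (n-1), mul_left_comm, ← Real.rpow_add hr]
    congr 2
    push_cast [hn]; ring
  rw [integrableOn_congr_fun e measurableSet_Ioi, ← Set.Ioc_union_Ioi_eq_Ioi zero_le_one]
  have meas : Measurable (fun r : ℝ => min (C * r ^ 2) 4 * r ^ (-1 - 2 * s)) := by fun_prop
  apply IntegrableOn.union
  · have h : IntegrableOn (fun r : ℝ => C * r ^ (1 - 2 * s)) (Set.Ioc 0 1) := by
      apply Integrable.const_mul
      have := (intervalIntegral.intervalIntegrable_rpow' (a := 0) (b := 1) (r := 1 - 2 * s) (by linarith [hs.2]))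
      rwa [intervalIntegrable_iff_integrableOn_Ioc_of_le zero_le_one] at this
    apply Integrable.mono' h meas.aestronglyMeasurable
    refine (ae_restrict_iff' measurableSet_Ioc).2 (Filter.Eventually.of_forall fun r hr => ?_)
    have hr0 := hr.1
    rw [Real.norm_of_nonneg (by positivity)]
    calc _ ≤ (C * r ^ 2) * r ^ (-1 - 2 * s) := by gcongr; exact min_le_left _ _
      _ = _ := by
        rw [← Real.rpow_natCast r 2, mul_assoc, ← Real.rpow_add hr0]
        congr 2; push_cast; ring
  · have h : IntegrableOn (fun r : ℝ => 4 * r ^ (-1 - 2 * s)) (Set.Ioi 1) := by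
      apply Integrable.const_mul
      exact integrableOn_Ioi_rpow_of_lt (by linarith [hs.1]) one_pos
    apply Integrable.mono' h meas.aestronglyMeasurable
    refine (ae_restrict_iff' measurableSet_Ioi).2 (Filter.Eventually.of_forall fun r hr => ?_)
    have hr0 : 0 < r := lt_trans one_pos hr
    rw [Real.norm_of_nonneg (by positivity)]
    gcongr; exact min_le_right _ _


lemma LK_bound {n : ℕ} (hn : 1 ≤ n) {s : ℝ} (hs : s ∈ Set.Ioo (0 : ℝ) 1) {η : Euc n → ℝ}
    (h1 : ContDiff ℝ (⊤ : ℕ∞) η) (h2 : HasCompactSupport η) (h01 : ∀ x, 0 ≤ η x ∧ η x ≤ 1)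
    (h3 : ∀ x : Euc n, 2 ≤ ‖x‖ → η x = 0) {Lam : ℝ} (hLam : 0 < Lam) :
    ∃ C : ℝ, 0 < C ∧ ∀ K : Euc n → ℝ,
      (∀ z, z ≠ 0 → |K z| ≤ Lam * ‖z‖ ^ (-(n : ℝ) - 2 * s)) →
      ∀ x, |LK n K η x| ≤ C * (1 + ‖x‖) ^ (-(n : ℝ) - 2 * s) := by
  obtain ⟨C₀, hC₀, hsd⟩ := secdiff_bound h1 h2
  have : Nonempty (Fin n) := ⟨⟨0, hn⟩⟩
  have : Nontrivial (Euc n) := inferInstance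
  have hn0 : (0 : ℝ) ≤ n := Nat.cast_nonneg n
  have hs0 := hs.1
  set γ : ℝ := (n : ℝ) + 2 * s with hγ
  have hγ0 : 0 < γ := by positivity
  have eγ : -(n : ℝ) - 2 * s = -γ := by rw [hγ]; ring
  rw [eγ]
  have hker := ker_integrable hn hs C₀ hC₀
  rw [eγ] at hker
  have hηi : Integrable η volume := h1.continuous.integrable_of_hasCompactSupport h2
  set I := ∫ z : Euc n, Lam * (min (C₀ * ‖z‖ ^ 2) 4 * ‖z‖ ^ (-γ)) with hI
  set J := ∫ z : Euc n, η z with hJ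
  have hI0 : 0 ≤ I := integral_nonneg fun z => by positivity
  have hJ0 : 0 ≤ J := integral_nonneg fun z => (h01 z).1
  clear_value I J
  have hae : ∀ᵐ z : Euc n, z ≠ 0 := by
    simp [ae_iff]
  refine ⟨I * 5 ^ γ + Lam * 4 ^ γ * J + 1, by positivity, fun K hK x => ?_⟩
  unfold LK
  rw [abs_mul, abs_of_pos (by norm_num : (0 : ℝ) < 1 / 2)]
  have h1x : 0 < 1 + ‖x‖ := by positivity
  have hW : 0 < (1 + ‖x‖) ^ (-γ) := by positivity
  by_cases hx : ‖x‖ ≤ 4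
  · have b1 : |∫ z : Euc n, (2 * η x - η (x + z) - η (x - z)) * K z| ≤ I := by
      rw [← Real.norm_eq_abs, hI]
      apply norm_integral_le_of_norm_le (hker.const_mul Lam)
      filter_upwards [hae] with z hz
      rw [norm_mul, Real.norm_eq_abs, Real.norm_eq_abs]
      have m1 : |2 * η x - η (x + z) - η (x - z)| ≤ min (C₀ * ‖z‖ ^ 2) 4 := by
        apply le_min (hsd x z)
        have a1 := h01 x
        have a2 := h01 (x + z)
        have a3 := h01 (x - z)
        rw [abs_le]; constructor <;> linarith
      have m2 := hK z hz
      calc _ ≤ min (C₀ * ‖z‖ ^ 2) 4 * (Lam * ‖z‖ ^ (-γ)) := by gcongr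
        _ = _ := by ring
    have b2 : 1 ≤ 5 ^ γ * (1 + ‖x‖) ^ (-γ) := by
      rw [Real.rpow_neg h1x.le, ← div_eq_mul_inv, one_le_div (by positivity)]
      gcongr; linarith
    have : I ≤ I * (5 ^ γ * (1 + ‖x‖) ^ (-γ)) := le_mul_of_one_le_right hI0 b2
    have : 0 ≤ Lam * 4 ^ γ * J * (1 + ‖x‖) ^ (-γ) := by positivity
    have e : (I * 5 ^ γ + Lam * 4 ^ γ * J + 1) * (1 + ‖x‖) ^ (-γ) =
      I * (5 ^ γ * (1 + ‖x‖) ^ (-γ)) + Lam * 4 ^ γ * J * (1 + ‖x‖) ^ (-γ)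
        + (1 + ‖x‖) ^ (-γ) := by ring
    rw [e]
    linarith
  · push Not at hx
    have e0 : η x = 0 := h3 x (by linarith)
    have b1 : |∫ z : Euc n, (2 * η x - η (x + z) - η (x - z)) * K z| ≤
        ∫ z : Euc n, (Lam * (‖x‖ / 2) ^ (-γ)) * (η (x + z) + η (x - z)) := by
      rw [← Real.norm_eq_abs]
      apply norm_integral_le_of_norm_le
      · apply Integrable.const_mul
        exact (hηi.comp_add_left x).add (hηi.comp_sub_left x)
      filter_upwards [hae] with z hz
      rw [norm_mul, Real.norm_eq_abs, Real.norm_eq_abs, e0]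
      have a2 := h01 (x + z)
      have a3 := h01 (x - z)
      have e1 : |2 * 0 - η (x + z) - η (x - z)| = η (x + z) + η (x - z) := by
        rw [abs_of_nonpos (by linarith)]; ring
      rw [e1]
      by_cases hz2 : ‖x‖ / 2 ≤ ‖z‖
      · have m2 := hK z hz
        have m3 : ‖z‖ ^ (-γ) ≤ (‖x‖ / 2) ^ (-γ) :=
          Real.rpow_le_rpow_of_nonpos (by linarith) hz2 (by linarith)
        rw [mul_comm]
        exact mul_le_mul_of_nonneg_right (m2.trans (by gcongr)) (by linarith)
      · push Not at hz2
        have z1 : η (x + z) = 0 := h3 _ (by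
          have := norm_sub_le (x + z) z
          rw [add_sub_cancel_right] at this; linarith)
        have z2 : η (x - z) = 0 := h3 _ (by
          have := norm_add_le (x - z) z
          rw [sub_add_cancel] at this; linarith)
        simp [z1, z2]
    rw [integral_const_mul, integral_add (hηi.comp_add_left x) (hηi.comp_sub_left x),
      integral_add_left_eq_self, integral_sub_left_eq_self, ← hJ] at b1
    have b3 : (‖x‖ / 2) ^ (-γ) ≤ 4 ^ γ * (1 + ‖x‖) ^ (-γ) := by
      have : (4 : ℝ) ^ γ = (1 / 4 : ℝ) ^ (-γ) := by
        rw [Real.rpow_neg (by norm_num), ← Real.inv_rpow (by norm_num)]; norm_num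
      rw [this, ← Real.mul_rpow (by norm_num) h1x.le]
      exact Real.rpow_le_rpow_of_nonpos (by positivity) (by linarith) (by linarith)
    have b4 : Lam * (‖x‖ / 2) ^ (-γ) * (J + J) ≤ Lam * (4 ^ γ * (1 + ‖x‖) ^ (-γ)) * (J + J) := by
      gcongr
    have : 0 ≤ I * 5 ^ γ * (1 + ‖x‖) ^ (-γ) := by positivity
    have e : (I * 5 ^ γ + Lam * 4 ^ γ * J + 1) * (1 + ‖x‖) ^ (-γ) =
      I * 5 ^ γ * (1 + ‖x‖) ^ (-γ) + 1 / 2 * (Lam * (4 ^ γ * (1 + ‖x‖) ^ (-γ)) * (J + J))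
        + (1 + ‖x‖) ^ (-γ) := by ring
    rw [e]
    linarith

lemma LK_scale {n : ℕ} {s : ℝ} (K η : Euc n → ℝ) {ρ : ℝ} (hρ : 0 < ρ) (x : Euc n) :
    LK n K (fun y => η (ρ⁻¹ • y)) x =
      ρ ^ (-2 * s) * LK n (fun z => ρ ^ ((n : ℝ) + 2 * s) * K (ρ • z)) η (ρ⁻¹ • x) := by
  unfold LK
  have h := Measure.integral_comp_smul_of_nonneg (volume : Measure (Euc n))
    (fun z => (2 * η (ρ⁻¹ • x) - η (ρ⁻¹ • (x + z)) - η (ρ⁻¹ • (x - z))) * K z) ρ (hR := hρ.le)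
  have hfr : Module.finrank ℝ (Euc n) = n := by simp
  rw [hfr, smul_eq_mul] at h
  have e : ∀ z : Euc n, (2 * η (ρ⁻¹ • x) - η (ρ⁻¹ • x + z) - η (ρ⁻¹ • x - z)) *
      (ρ ^ ((n : ℝ) + 2 * s) * K (ρ • z)) = ρ ^ ((n : ℝ) + 2 * s) *
      ((2 * η (ρ⁻¹ • x) - η (ρ⁻¹ • (x + ρ • z)) - η (ρ⁻¹ • (x - ρ • z))) * K (ρ • z)) := by
    intro z
    rw [smul_add, smul_sub, smul_smul, inv_mul_cancel₀ hρ.ne', one_smul]; ring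
  simp_rw [e]
  rw [integral_const_mul, h]
  have : ρ ^ (-2 * s) * (ρ ^ ((n : ℝ) + 2 * s) * (ρ ^ n)⁻¹) = 1 := by
    rw [← Real.rpow_natCast ρ n, ← Real.rpow_neg hρ.le, ← Real.rpow_add hρ, ← Real.rpow_add hρ]
    convert Real.rpow_zero ρ using 2; ring
  linear_combination (-(1/2) * ∫ z : Euc n, (2 * η (ρ⁻¹ • x) - η (ρ⁻¹ • (x + z)) - η (ρ⁻¹ • (x - z))) * K z) * this


def wt {n : ℕ} (γ ρ : ℝ) (x : Euc n) : ℝ := (1 + ‖x‖ / ρ) ^ (-γ)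

lemma wt_pos {n : ℕ} {γ ρ : ℝ} (hρ : 0 < ρ) (x : Euc n) : 0 < wt γ ρ x := by
  unfold wt; positivity

lemma wt_meas {n : ℕ} {γ ρ : ℝ} : Measurable (wt γ ρ : Euc n → ℝ) := by
  unfold wt; fun_prop

lemma wt_le_one {n : ℕ} {γ ρ : ℝ} (hγ : 0 < γ) (hρ : 0 < ρ) (x : Euc n) : wt γ ρ x ≤ 1 := by
  apply Real.rpow_le_one_of_one_le_of_nonpos
  · have : 0 ≤ ‖x‖ / ρ := by positivity
    linarith
  · linarith

lemma wt_le {n : ℕ} {γ ρ : ℝ} (hγ : 0 < γ) (hρ : 1 ≤ ρ) (x : Euc n) :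
    wt γ ρ x ≤ ρ ^ γ * (1 + ‖x‖) ^ (-γ) := by
  have h0 : 0 < ρ := by linarith
  have : ρ ^ γ = (ρ⁻¹) ^ (-γ) := by
    rw [Real.rpow_neg (by positivity), Real.inv_rpow h0.le, inv_inv]
  rw [this, ← Real.mul_rpow (by positivity) (by positivity)]
  apply Real.rpow_le_rpow_of_nonpos (by positivity) _ (by linarith)
  rw [mul_add, div_eq_inv_mul, mul_one]
  gcongr
  exact inv_le_one_of_one_le₀ hρ

lemma wt_scale {n : ℕ} {γ R t : ℝ} (hγ : 0 < γ) (hR : 0 < R) (ht : 1 ≤ t) (x : Euc n) :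
    t ^ (-γ) * wt γ (t * R) x ≤ wt γ R x := by
  have h0 : 0 < t := by linarith
  unfold wt
  rw [← Real.mul_rpow (by positivity) (by positivity)]
  apply Real.rpow_le_rpow_of_nonpos (by positivity) _ (by linarith)
  rw [mul_add, mul_one]
  have : t * (‖x‖ / (t * R)) = ‖x‖ / R := by field_simp
  rw [this]; linarith

lemma wt_dyadic {n : ℕ} {γ R : ℝ} (hγ : 0 < γ) (hR : 0 < R) (x : Euc n) :
    ∃ k : ℕ, ‖x‖ ≤ 2 ^ k * R ∧ wt γ R x ≤ 2 ^ γ * ((2 : ℝ) ^ k) ^ (-γ) := by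
  classical
  have hex : ∃ k : ℕ, ‖x‖ ≤ 2 ^ k * R := by
    obtain ⟨k, hk⟩ := pow_unbounded_of_one_lt (‖x‖ / R) (one_lt_two)
    exact ⟨k, by rw [div_lt_iff₀ hR] at hk; exact hk.le⟩
  refine ⟨Nat.find hex, Nat.find_spec hex, ?_⟩
  rcases hk : Nat.find hex with _ | m
  · simp only [pow_zero, Real.one_rpow, mul_one]
    exact (wt_le_one hγ hR x).trans (Real.one_le_rpow (by norm_num) hγ.le)
  · have hm : ¬ (‖x‖ ≤ 2 ^ m * R) := Nat.find_min hex (by omega)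
    push Not at hm
    have : (2 : ℝ) ^ γ = (2⁻¹ : ℝ) ^ (-γ) := by
      rw [Real.rpow_neg (by positivity), Real.inv_rpow (by norm_num), inv_inv]
    rw [this, ← Real.mul_rpow (by positivity) (by positivity)]
    apply Real.rpow_le_rpow_of_nonpos (by positivity) _ (by linarith)
    have h2 : (2 : ℝ)⁻¹ * 2 ^ (m + 1) = 2 ^ m := by rw [pow_succ]; ring
    rw [h2]
    rw [← lt_div_iff₀ hR] at hm
    linarith

lemma wt_integrable {n : ℕ} {γ R : ℝ} (hγ : (n : ℝ) < γ) (hR : 0 < R) :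
    Integrable (wt γ R : Euc n → ℝ) volume ∧
    ∫ x : Euc n, wt γ R x = R ^ (n : ℝ) * ∫ x : Euc n, (1 + ‖x‖) ^ (-γ) := by
  have hfr : Module.finrank ℝ (Euc n) = n := by simp
  have h1 : Integrable (fun x : Euc n => (1 + ‖x‖) ^ (-γ)) volume :=
    integrable_one_add_norm (by rw [hfr]; exact hγ)
  have e : ∀ x : Euc n, wt γ R x = (fun x : Euc n => (1 + ‖x‖) ^ (-γ)) (R⁻¹ • x) := by
    intro x
    simp only [wt, norm_smul, norm_inv, Real.norm_of_nonneg hR.le]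
    rw [div_eq_inv_mul]
  constructor
  · rw [show (wt γ R : Euc n → ℝ) = fun x => (fun x : Euc n => (1 + ‖x‖) ^ (-γ)) (R⁻¹ • x) from funext e]
    exact h1.comp_smul (inv_ne_zero hR.ne')
  · rw [integral_congr_ae (Filter.Eventually.of_forall e),
      Measure.integral_comp_inv_smul_of_nonneg _ (fun x : Euc n => (1 + ‖x‖) ^ (-γ)) hR.le, hfr, Real.rpow_natCast, smul_eq_mul]

lemma u_wt_integrable {n : ℕ} {s R : ℝ} (hs : 0 < s) (hR : 1 ≤ R) {u : Euc n → ℝ} (humeas : Measurable u)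
    (hupos : ∀ x, 0 ≤ u x) (hutail : MemL1Tail n s u) :
    Integrable (fun x => u x * wt ((n : ℝ) + 2 * s) R x) volume := by
  have hn0 : (0 : ℝ) ≤ n := Nat.cast_nonneg n
  have h0 : 0 < R := by linarith
  apply Integrable.mono' (hutail.2.const_mul (R ^ ((n : ℝ) + 2 * s)))
  · exact (humeas.mul wt_meas).aestronglyMeasurable
  · refine Filter.Eventually.of_forall fun x => ?_
    rw [Real.norm_of_nonneg (mul_nonneg (hupos x) (wt_pos h0 x).le), abs_of_nonneg (hupos x)]
    have := wt_le (γ := (n : ℝ) + 2 * s) (by positivity) hR x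
    rw [mul_left_comm]
    apply mul_le_mul_of_nonneg_left _ (hupos x)
    rw [show -(n : ℝ) - 2 * s = -((n : ℝ) + 2 * s) by ring]
    exact this

lemma test_ineq (n : ℕ) (hn : 1 ≤ n) (s : ℝ) (hs : s ∈ Set.Ioo (0 : ℝ) 1)
    (lam Lam : ℝ) (K : Euc n → ℝ) (hK : IsAdmissibleKernel n s lam Lam K)
    (q : ℝ) (u : Euc n → ℝ) (humeas : Measurable u) (hupos : ∀ x, 0 ≤ u x)
    (huloc : MemLqLoc n q u) (hutail : MemL1Tail n s u)
    (hsub : ∀ φ : Euc n → ℝ, IsTestFun n φ → (∀ x, 0 ≤ φ x) →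
      (∫ x : Euc n, u x * LK n K φ x) ≤ -∫ x : Euc n, u x ^ q * φ x) :
    ∃ C : ℝ, 0 < C ∧ ∀ ρ : ℝ, 1 ≤ ρ → ∫ x in closedBall (0 : Euc n) ρ, u x ^ q ≤
      C * ρ ^ (-2 * s) * ∫ x, u x * wt ((n : ℝ) + 2 * s) ρ x := by
  obtain ⟨hlam, hLam, hKm, -, hKb⟩ := hK
  have hLam0 : 0 < Lam := by linarith
  let η : ContDiffBump (0 : Euc n) := ⟨1, 2, one_pos, one_lt_two⟩
  have h1 : ContDiff ℝ (⊤ : ℕ∞) (η : Euc n → ℝ) := η.contDiff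
  have h2 : HasCompactSupport (η : Euc n → ℝ) := η.hasCompactSupport
  have h01 : ∀ x, 0 ≤ η x ∧ η x ≤ 1 := fun x => ⟨η.nonneg, η.le_one⟩
  have h3 : ∀ x : Euc n, 2 ≤ ‖x‖ → η x = 0 := fun x hx => η.zero_of_le_dist (by simpa using hx)
  have h4 : ∀ x : Euc n, ‖x‖ ≤ 1 → η x = 1 := fun x hx =>
    η.one_of_mem_closedBall (by simpa using hx)
  obtain ⟨C, hC, hb⟩ := LK_bound hn hs h1 h2 h01 h3 hLam0
  refine ⟨C, hC, fun ρ hρ1 => ?_⟩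
  have hρ : 0 < ρ := by linarith
  have hnρ : ∀ x : Euc n, ‖ρ⁻¹ • x‖ = ‖x‖ / ρ := fun x => by
    rw [norm_smul, norm_inv, Real.norm_of_nonneg hρ.le, div_eq_inv_mul]
  set φ : Euc n → ℝ := fun x => η (ρ⁻¹ • x) with hφ
  have hφ0 : ∀ x, 0 ≤ φ x := fun x => (h01 _).1
  have hts : IsTestFun n φ := by
    refine ⟨h1.comp (contDiff_const_smul _), ?_⟩
    exact h2.comp_homeomorph (Homeomorph.smulOfNeZero ρ⁻¹ (inv_ne_zero hρ.ne'))
  have hmain := hsub φ hts hφ0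
  have hbd : ‖∫ x : Euc n, u x * LK n K φ x‖ ≤
      ∫ x : Euc n, (C * ρ ^ (-2 * s)) * (u x * wt ((n : ℝ) + 2 * s) ρ x) := by
    apply norm_integral_le_of_norm_le
      ((u_wt_integrable hs.1 hρ1 humeas hupos hutail).const_mul _)
    refine Filter.Eventually.of_forall fun x => ?_
    rw [hφ, LK_scale (s := s) K η hρ x, norm_mul, norm_mul, Real.norm_of_nonneg (hupos x),
      Real.norm_of_nonneg (by positivity : 0 ≤ ρ ^ (-2 * s)), Real.norm_eq_abs]
    have := hb (fun z => ρ ^ ((n : ℝ) + 2 * s) * K (ρ • z)) (by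
      intro z hz
      have hz' : ρ • z ≠ 0 := smul_ne_zero hρ.ne' hz
      have k1 := hKb _ hz'
      have k0 : 0 ≤ K (ρ • z) := le_trans (by positivity) k1.1
      rw [abs_of_nonneg (by positivity)]
      have hzn : 0 < ‖z‖ := norm_pos_iff.2 hz
      calc _ ≤ ρ ^ ((n : ℝ) + 2 * s) * (Lam * ‖ρ • z‖ ^ (-(n : ℝ) - 2 * s)) := by
            gcongr; exact k1.2
        _ = (ρ ^ ((n : ℝ) + 2 * s) * ρ ^ (-(n : ℝ) - 2 * s)) * (Lam * ‖z‖ ^ (-(n : ℝ) - 2 * s)) := by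
            rw [norm_smul, Real.norm_of_nonneg hρ.le, Real.mul_rpow hρ.le hzn.le]; ring
        _ = _ := by
            rw [← Real.rpow_add hρ]
            ring_nf
            simp) (ρ⁻¹ • x)
    rw [hnρ] at this
    have e : (1 + ‖x‖ / ρ) ^ (-(n : ℝ) - 2 * s) = wt ((n : ℝ) + 2 * s) ρ x := by
      unfold wt; congr 1; ring
    rw [e] at this
    calc _ ≤ u x * (ρ ^ (-2 * s) * (C * wt ((n : ℝ) + 2 * s) ρ x)) := by
          have := hupos x
          gcongr
      _ = _ := by ring
  rw [integral_const_mul] at hbd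
  have hle : ∫ x in closedBall (0 : Euc n) ρ, u x ^ q ≤ ∫ x : Euc n, u x ^ q * φ x := by
    rw [← integral_indicator measurableSet_closedBall]
    have hloc := huloc (2 * ρ) (by positivity)
    apply integral_mono_of_nonneg
    · refine Filter.Eventually.of_forall fun x => ?_
      exact Set.indicator_nonneg (fun x _ => Real.rpow_nonneg (hupos x) q) x
    · rw [← integrable_indicator_iff measurableSet_ball] at hloc
      apply hloc.mono'
      · exact ((humeas.pow_const q).mul hts.1.continuous.measurable).aestronglyMeasurable
      · refine Filter.Eventually.of_forall fun x => ?_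
        have u0 := Real.rpow_nonneg (hupos x) q
        rw [Real.norm_of_nonneg (mul_nonneg u0 (hφ0 x))]
        by_cases hx : x ∈ ball (0 : Euc n) (2 * ρ)
        · rw [Set.indicator_of_mem hx]
          exact mul_le_of_le_one_right u0 (h01 _).2
        · rw [Set.indicator_of_notMem hx]
          have : φ x = 0 := by
            apply h3
            rw [hnρ, le_div_iff₀ hρ]
            simpa using hx
          simp [this]
    · refine Filter.Eventually.of_forall fun x => ?_
      have u0 := Real.rpow_nonneg (hupos x) q
      by_cases hx : x ∈ closedBall (0 : Euc n) ρ
      · have : φ x = 1 := by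
          apply h4
          rw [hnρ, div_le_one hρ]
          simpa using hx
        simp only [Set.indicator_of_mem hx, this, mul_one, le_refl]
      · simp only [Set.indicator_of_notMem hx]
        exact mul_nonneg u0 (hφ0 x)
  rw [Real.norm_eq_abs] at hbd
  linarith [(abs_le.1 hbd).1]


lemma dyadic_ineq {n : ℕ} {s : ℝ} (hs : 0 < s) {q : ℝ} {u : Euc n → ℝ} (humeas : Measurable u)
    (hupos : ∀ x, 0 ≤ u x) (huloc : MemLqLoc n q u) (hutail : MemL1Tail n s u)
    {C : ℝ} (hC : 0 < C)
    (h : ∀ ρ : ℝ, 1 ≤ ρ → ∫ x in closedBall (0 : Euc n) ρ, u x ^ q ≤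
      C * ρ ^ (-2 * s) * ∫ x, u x * wt ((n : ℝ) + 2 * s) ρ x) :
    ∃ C : ℝ, 0 < C ∧ ∀ R : ℝ, 1 ≤ R →
      Integrable (fun x => u x ^ q * wt ((n : ℝ) + 2 * s) R x) volume ∧
      ∫ x, u x ^ q * wt ((n : ℝ) + 2 * s) R x ≤
      C * R ^ (-2 * s) * ∫ x, u x * wt ((n : ℝ) + 2 * s) R x := by
  have hn0 : (0 : ℝ) ≤ n := Nat.cast_nonneg n
  set γ : ℝ := (n : ℝ) + 2 * s with hγ
  have hγ0 : 0 < γ := by positivity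
  set r : ℝ := 2 ^ (-2 * s) with hr
  have hr0 : 0 < r := by positivity
  have hr1 : r < 1 := Real.rpow_lt_one_of_one_lt_of_neg (by norm_num) (by linarith)
  have huq : ∀ x, 0 ≤ u x ^ q := fun x => Real.rpow_nonneg (hupos x) q
  refine ⟨2 ^ γ * C * (1 - r)⁻¹, mul_pos (by positivity) (inv_pos.2 (by linarith)), fun R hR => ?_⟩
  have hR0 : 0 < R := by linarith
  set B := ∫ x, u x * wt γ R x with hB
  have hB0 : 0 ≤ B := integral_nonneg fun x => mul_nonneg (hupos x) (wt_pos hR0 x).le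
  set D : ℝ := 2 ^ γ * C * R ^ (-2 * s) * B with hD
  have hD0 : 0 ≤ D := by positivity
  have h0 : ∀ x, 0 ≤ u x ^ q * wt γ R x := fun x => mul_nonneg (huq x) (wt_pos hR0 x).le
  have hm : Measurable (fun x => u x ^ q * wt γ R x) := (humeas.pow_const q).mul wt_meas
  have key : ∫⁻ x, ENNReal.ofReal (u x ^ q * wt γ R x) ≤ ENNReal.ofReal (D * (1 - r)⁻¹) := by
    calc ∫⁻ x, ENNReal.ofReal (u x ^ q * wt γ R x)
        ≤ ∫⁻ x, ∑' k : ℕ, ENNReal.ofReal (2 ^ γ * ((2 : ℝ) ^ k) ^ (-γ)) *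
          (closedBall (0 : Euc n) (2 ^ k * R)).indicator (fun x => ENNReal.ofReal (u x ^ q)) x := by
          apply lintegral_mono
          intro x
          obtain ⟨k, hk1, hk2⟩ := wt_dyadic hγ0 hR0 x
          refine le_trans ?_ (ENNReal.le_tsum k)
          rw [Set.indicator_of_mem (by simpa using hk1), ← ENNReal.ofReal_mul (by positivity)]
          simp only [mul_comm (u x ^ q)]
          exact ENNReal.ofReal_le_ofReal (mul_le_mul_of_nonneg_right hk2 (huq x))
      _ = ∑' k : ℕ, ENNReal.ofReal (2 ^ γ * ((2 : ℝ) ^ k) ^ (-γ)) *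
          ∫⁻ x in closedBall (0 : Euc n) (2 ^ k * R), ENNReal.ofReal (u x ^ q) := by
          have hmq : Measurable (fun x => ENNReal.ofReal (u x ^ q)) :=
            (humeas.pow_const q).ennreal_ofReal
          rw [lintegral_tsum (fun k =>
            ((hmq.indicator measurableSet_closedBall).const_mul _).aemeasurable)]
          congr 1; ext k
          rw [lintegral_const_mul _ (hmq.indicator measurableSet_closedBall),
            lintegral_indicator measurableSet_closedBall]
      _ ≤ ∑' k : ℕ, ENNReal.ofReal (D * r ^ k) := by
          apply ENNReal.tsum_le_tsum
          intro k
          have h2k : (1 : ℝ) ≤ 2 ^ k := one_le_pow₀ (by norm_num)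
          have hi : IntegrableOn (fun x => u x ^ q) (closedBall (0 : Euc n) (2 ^ k * R)) volume :=
            (huloc (2 ^ k * R + 1) (by positivity)).mono_set
              (closedBall_subset_ball (by linarith))
          rw [← ofReal_integral_eq_lintegral_ofReal hi (Filter.Eventually.of_forall huq),
            ← ENNReal.ofReal_mul (by positivity)]
          apply ENNReal.ofReal_le_ofReal
          have h1R : 1 ≤ 2 ^ k * R := by nlinarith
          have a1 := h (2 ^ k * R) h1R
          have a2 : ((2 : ℝ) ^ k) ^ (-γ) * ∫ x, u x * wt γ (2 ^ k * R) x ≤ B := by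
            rw [← integral_const_mul]
            apply integral_mono ((u_wt_integrable hs h1R humeas hupos hutail).const_mul _)
              (u_wt_integrable hs hR humeas hupos hutail)
            intro x
            have := mul_le_mul_of_nonneg_left (wt_scale hγ0 hR0 h2k x) (hupos x)
            simp only
            linarith
          have a3 : ((2 : ℝ) ^ k * R) ^ (-2 * s) = r ^ k * R ^ (-2 * s) := by
            rw [Real.mul_rpow (by positivity) hR0.le, hr, Real.rpow_pow_comm (by norm_num)]
          calc 2 ^ γ * ((2 : ℝ) ^ k) ^ (-γ) * ∫ x in closedBall (0 : Euc n) (2 ^ k * R), u x ^ q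
              ≤ 2 ^ γ * ((2 : ℝ) ^ k) ^ (-γ) * (C * (2 ^ k * R) ^ (-2 * s) *
                ∫ x, u x * wt γ (2 ^ k * R) x) := by gcongr
            _ = 2 ^ γ * C * (r ^ k * R ^ (-2 * s)) * (((2 : ℝ) ^ k) ^ (-γ) *
                ∫ x, u x * wt γ (2 ^ k * R) x) := by rw [a3]; ring
            _ ≤ 2 ^ γ * C * (r ^ k * R ^ (-2 * s)) * B := by gcongr
            _ = D * r ^ k := by rw [hD]; ring
      _ = ENNReal.ofReal (D * (1 - r)⁻¹) := by
          rw [← ENNReal.ofReal_tsum_of_nonneg (fun k => by positivity)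
            ((summable_geometric_of_lt_one hr0.le hr1).mul_left D), tsum_mul_left,
            tsum_geometric_of_lt_one hr0.le hr1]
  constructor
  · refine ⟨hm.aestronglyMeasurable, ?_⟩
    rw [hasFiniteIntegral_iff_ofReal (Filter.Eventually.of_forall h0)]
    exact key.trans_lt ENNReal.ofReal_lt_top
  · rw [integral_eq_lintegral_of_nonneg_ae (Filter.Eventually.of_forall h0) hm.aestronglyMeasurable]
    have hnn : 0 ≤ D * (1 - r)⁻¹ := mul_nonneg hD0 (inv_nonneg.2 (by linarith))
    refine (ENNReal.toReal_le_of_le_ofReal hnn key).trans (le_of_eq ?_)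
    rw [hD]; ring

lemma young_aux {q a b T : ℝ} (hq : 1 < q) (ha : 0 ≤ a) (hb : 0 < b) (hT : 0 < T) :
    b * a ≤ T * a ^ q + b ^ (q / (q - 1)) * T ^ (-(1 / (q - 1))) := by
  have hq' : 0 < q - 1 := by linarith
  have p1 : 0 ≤ b ^ (q / (q - 1)) * T ^ (-(1 / (q - 1))) := by positivity
  have p2 : 0 ≤ T * a ^ q := by positivity
  by_cases h : b ≤ T * a ^ (q - 1)
  · rcases ha.eq_or_lt with rfl | ha
    · rw [mul_zero]; linarith
    · have : a ^ q = a ^ (q - 1) * a := by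
        rw [← Real.rpow_add_one ha.ne']; congr 1; ring
      have := mul_le_mul_of_nonneg_right h ha.le
      nlinarith
  · push Not at h
    have h1 : a ≤ (b / T) ^ (1 / (q - 1)) := by
      have : a = (a ^ (q - 1)) ^ (1 / (q - 1)) := by
        rw [← Real.rpow_mul ha, mul_one_div_cancel hq'.ne', Real.rpow_one]
      rw [this]
      apply Real.rpow_le_rpow (by positivity) _ (by positivity)
      rw [le_div_iff₀ hT]; linarith
    have h2 : b * (b / T) ^ (1 / (q - 1)) = b ^ (q / (q - 1)) * T ^ (-(1 / (q - 1))) := by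
      rw [Real.div_rpow hb.le hT.le, Real.rpow_neg hT.le]
      have : q / (q - 1) = 1 / (q - 1) + 1 := by field_simp; ring
      rw [this, Real.rpow_add_one hb.ne']
      ring
    rw [← h2]
    have := mul_le_mul_of_nonneg_left h1 hb.le
    linarith

lemma final_step {n : ℕ} {s : ℝ} (hs : 0 < s) {q : ℝ} (hq1 : 1 < q)
    (hqn : (n : ℝ) ≤ 2 * s * (q / (q - 1)))
    {u : Euc n → ℝ} (humeas : Measurable u)
    (hupos : ∀ x, 0 ≤ u x) (huloc : MemLqLoc n q u) (hutail : MemL1Tail n s u)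
    {C : ℝ} (hC : 0 < C)
    (h : ∀ R : ℝ, 1 ≤ R →
      Integrable (fun x => u x ^ q * wt ((n : ℝ) + 2 * s) R x) volume ∧
      ∫ x, u x ^ q * wt ((n : ℝ) + 2 * s) R x ≤
      C * R ^ (-2 * s) * ∫ x, u x * wt ((n : ℝ) + 2 * s) R x) :
    ∀ᵐ x : Euc n, u x = 0 := by
  have hn0 : (0 : ℝ) ≤ n := Nat.cast_nonneg n
  set γ : ℝ := (n : ℝ) + 2 * s with hγ
  have hγ0 : 0 < γ := by positivity
  have hγn : (n : ℝ) < γ := by linarith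
  clear_value γ
  have huq : ∀ x, 0 ≤ u x ^ q := fun x => Real.rpow_nonneg (hupos x) q
  set θ := 1 / (q - 1) with hθ
  have hθ0 : 0 < θ := one_div_pos.2 (by linarith)
  set p := q / (q - 1) with hp
  obtain ⟨c₀, hc₀⟩ : ∃ c₀, c₀ = ∫ x : Euc n, (1 + ‖x‖) ^ (-γ) := ⟨_, rfl⟩
  have hc₀0 : 0 ≤ c₀ := by rw [hc₀]; exact integral_nonneg fun x => by positivity
  set E := C ^ p * c₀ with hE
  have hE0 : 0 ≤ E := by positivity
  have hbE : ∀ R : ℝ, 1 ≤ R → (C * R ^ (-2 * s)) ^ p * ∫ x : Euc n, wt γ R x ≤ E := by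
    intro R hR
    have hR0 : 0 < R := by linarith
    rw [(wt_integrable hγn hR0).2, ← hc₀, Real.mul_rpow hC.le (by positivity), ← Real.rpow_mul hR0.le]
    have : R ^ (-2 * s * p) * R ^ (n : ℝ) ≤ 1 := by
      rw [← Real.rpow_add hR0]
      exact Real.rpow_le_one_of_one_le_of_nonpos hR (by linarith)
    calc _ = C ^ p * c₀ * (R ^ (-2 * s * p) * R ^ (n : ℝ)) := by ring
      _ ≤ C ^ p * c₀ * 1 := by gcongr
      _ = E := by rw [mul_one]
  have hui : ∀ R : ℝ, 1 ≤ R → Integrable (fun x => u x * wt γ R x) volume := fun R hR => by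
    rw [hγ]; exact u_wt_integrable hs hR humeas hupos hutail
  have hlow : ∀ R : ℝ, 1 ≤ R → 2 ^ (-γ) * ∫ x in closedBall (0 : Euc n) R, u x ^ q ≤
      ∫ x, u x ^ q * wt γ R x := by
    intro R hR
    have hR0 : 0 < R := by linarith
    rw [← integral_const_mul, ← integral_indicator measurableSet_closedBall]
    apply integral_mono_of_nonneg _ (h R hR).1
    · refine Filter.Eventually.of_forall fun x => ?_
      by_cases hx : x ∈ closedBall (0 : Euc n) R
      · simp only [Set.indicator_of_mem hx]
        rw [mul_comm]
        apply mul_le_mul_of_nonneg_left _ (huq x)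
        apply Real.rpow_le_rpow_of_nonpos (by positivity) _ (by linarith)
        have : ‖x‖ / R ≤ 1 := by rw [div_le_one hR0]; simpa using hx
        linarith
      · simp only [Set.indicator_of_notMem hx]
        exact mul_nonneg (huq x) (wt_pos hR0 x).le
    · refine Filter.Eventually.of_forall fun x => ?_
      exact Set.indicator_nonneg (fun x _ => mul_nonneg (by positivity) (huq x)) x
  have h2γ : (0 : ℝ) < 2 ^ (-γ) := by positivity
  -- step 1
  have hcov : AECover (volume : Measure (Euc n)) Filter.atTop (fun R : ℝ => closedBall (0 : Euc n) R) :=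
    aecover_closedBall Filter.tendsto_id
  have hloc : ∀ R : ℝ, IntegrableOn (fun x => u x ^ q) (closedBall (0 : Euc n) R) volume := fun R =>
    (huloc (|R| + 1) (by positivity)).mono_set (closedBall_subset_ball (by linarith [le_abs_self R]))
  have hint : Integrable (fun x => u x ^ q) volume := by
    apply hcov.integrable_of_integral_bounded_of_nonneg_ae
      ((2 ^ (-γ))⁻¹ * (2 * (E * (1 / 2) ^ (-θ)))) hloc (Filter.Eventually.of_forall huq)
    filter_upwards [Filter.eventually_ge_atTop 1] with R hR
    have hR0 : 0 < R := by linarith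
    have b0 : 0 < C * R ^ (-2 * s) := by positivity
    have k1 := hlow R hR
    obtain ⟨k2, k3⟩ := h R hR
    have k4 : C * R ^ (-2 * s) * ∫ x, u x * wt γ R x ≤
        ∫ x, (1 / 2 * (u x ^ q * wt γ R x) + (C * R ^ (-2 * s)) ^ p * (1 / 2) ^ (-θ) * wt γ R x) := by
      rw [← integral_const_mul]
      apply integral_mono ((hui R hR).const_mul _)
        ((k2.const_mul _).add ((wt_integrable hγn hR0).1.const_mul _))
      intro x
      have := mul_le_mul_of_nonneg_right
        (young_aux (T := 1 / 2) hq1 (hupos x) b0 (by norm_num)) (wt_pos (γ := γ) hR0 x).le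
      rw [← hp, ← hθ] at this
      simp only [Pi.add_apply]
      linarith
    rw [integral_add (k2.const_mul _) ((wt_integrable hγn hR0).1.const_mul _), integral_const_mul,
      integral_const_mul] at k4
    have k5 := mul_le_mul_of_nonneg_right (hbE R hR) (by positivity : 0 ≤ (1 / 2 : ℝ) ^ (-θ))
    rw [le_inv_mul_iff₀ h2γ]
    linarith
  -- step 2
  have hQ0 : 0 ≤ ∫ x, u x ^ q := integral_nonneg huq
  have hcovt := hcov.integral_tendsto_of_countably_generated hint
  have m1 : ∀ R M T : ℝ, 1 ≤ R → 0 < T → 2 ^ (-γ) * ∫ x in closedBall (0 : Euc n) R, u x ^ q ≤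
      C * R ^ (-2 * s) * (∫ x in closedBall (0 : Euc n) M, u x) +
      T * ((∫ x, u x ^ q) - ∫ x in closedBall (0 : Euc n) M, u x ^ q) + E * T ^ (-θ) := by
    intro R M T hR hT
    have hR0 : 0 < R := by linarith
    have b0 : 0 < C * R ^ (-2 * s) := by positivity
    have i1 : Integrable ((closedBall (0 : Euc n) M).indicator u) volume :=
      (hutail.1.integrableOn_isCompact (isCompact_closedBall _ _)).integrable_indicator
        measurableSet_closedBall
    have i2 : Integrable ((closedBall (0 : Euc n) M)ᶜ.indicator (fun x => u x ^ q)) volume :=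
      hint.indicator measurableSet_closedBall.compl
    have i3 := (wt_integrable (n := n) hγn hR0).1
    have i12 : Integrable (fun x => C * R ^ (-2 * s) * (closedBall (0 : Euc n) M).indicator u x +
          T * (closedBall (0 : Euc n) M)ᶜ.indicator (fun x => u x ^ q) x) volume :=
      (i1.const_mul _).add (i2.const_mul _)
    obtain ⟨k2, k3⟩ := h R hR
    have k4 : C * R ^ (-2 * s) * ∫ x, u x * wt γ R x ≤
        ∫ x, ((C * R ^ (-2 * s) * (closedBall (0 : Euc n) M).indicator u x +
          T * (closedBall (0 : Euc n) M)ᶜ.indicator (fun x => u x ^ q) x) +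
          (C * R ^ (-2 * s)) ^ p * T ^ (-θ) * wt γ R x) := by
      rw [← integral_const_mul]
      apply integral_mono ((hui R hR).const_mul _)
        (i12.add (i3.const_mul _))
      intro x
      have w0 := (wt_pos (γ := γ) hR0 x).le
      have w1 := wt_le_one hγ0 hR0 x
      have e0 : 0 ≤ (C * R ^ (-2 * s)) ^ p * T ^ (-θ) * wt γ R x := by positivity
      by_cases hx : x ∈ closedBall (0 : Euc n) M
      · have hx' : x ∉ (closedBall (0 : Euc n) M)ᶜ := by simpa using hx
        simp only [Pi.add_apply, Set.indicator_of_mem hx, Set.indicator_of_notMem hx']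
        have := mul_le_mul_of_nonneg_left (mul_le_of_le_one_right (hupos x) w1) b0.le
        linarith
      · have hx' : x ∈ (closedBall (0 : Euc n) M)ᶜ := hx
        simp only [Pi.add_apply, Set.indicator_of_mem hx', Set.indicator_of_notMem hx]
        have y := mul_le_mul_of_nonneg_right (young_aux hq1 (hupos x) b0 hT) w0
        rw [← hp, ← hθ] at y
        have y2 := mul_le_of_le_one_right (mul_nonneg hT.le (huq x)) w1
        linarith
    rw [integral_add i12 (i3.const_mul _),
      integral_add (i1.const_mul _) (i2.const_mul _), integral_const_mul, integral_const_mul,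
      integral_const_mul, integral_indicator measurableSet_closedBall,
      integral_indicator measurableSet_closedBall.compl,
      setIntegral_compl measurableSet_closedBall hint] at k4
    have k5 := mul_le_mul_of_nonneg_right (hbE R hR) (by positivity : 0 ≤ T ^ (-θ))
    have := hlow R hR
    linarith
  have m2 : ∀ M T : ℝ, 0 < T → 2 ^ (-γ) * ∫ x, u x ^ q ≤
      T * ((∫ x, u x ^ q) - ∫ x in closedBall (0 : Euc n) M, u x ^ q) + E * T ^ (-θ) := by
    intro M T hT
    have t1 : Filter.Tendsto (fun R : ℝ => C * R ^ (-2 * s) * (∫ x in closedBall (0 : Euc n) M, u x) +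
      T * ((∫ x, u x ^ q) - ∫ x in closedBall (0 : Euc n) M, u x ^ q) + E * T ^ (-θ)) Filter.atTop
      (nhds (C * 0 * (∫ x in closedBall (0 : Euc n) M, u x) +
      T * ((∫ x, u x ^ q) - ∫ x in closedBall (0 : Euc n) M, u x ^ q) + E * T ^ (-θ))) := by
      have t0 : Filter.Tendsto (fun R : ℝ => R ^ (-2 * s)) Filter.atTop (nhds 0) := by
        have := tendsto_rpow_neg_atTop (y := 2 * s) (by linarith)
        simpa only [neg_mul] using this
      exact (((t0.const_mul C).mul_const _).add_const _).add_const _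
    have := le_of_tendsto_of_tendsto (hcovt.const_mul _) t1
      ((Filter.eventually_ge_atTop 1).mono fun R hR => m1 R M T hR hT)
    simpa using this
  have m3 : ∀ T : ℝ, 0 < T → 2 ^ (-γ) * ∫ x, u x ^ q ≤ E * T ^ (-θ) := by
    intro T hT
    have t1 := ((hcovt.const_sub (∫ x, u x ^ q)).const_mul T).add_const (E * T ^ (-θ))
    have := ge_of_tendsto' t1 fun M => m2 M T hT
    simpa using this
  have m4 : 2 ^ (-γ) * ∫ x, u x ^ q ≤ E * 0 :=
    ge_of_tendsto ((tendsto_rpow_neg_atTop hθ0).const_mul E)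
      ((Filter.eventually_gt_atTop 0).mono m3)
  have hQ : ∫ x, u x ^ q = 0 := by
    rw [mul_zero] at m4
    exact le_antisymm (nonpos_of_mul_nonpos_right m4 h2γ) hQ0
  rw [integral_eq_zero_iff_of_nonneg huq hint] at hQ
  filter_upwards [hQ] with x hx
  exact (Real.rpow_eq_zero (hupos x) (by linarith)).1 hx

/-- Liouville theorem for subsolutions of `L_K u = -u^q`. -/
theorem liouville_subsolutions
    (n : ℕ) (hn : 1 ≤ n) (s : ℝ) (hs : s ∈ Set.Ioo (0 : ℝ) 1)
    (lam Lam : ℝ) (K : Euc n → ℝ) (hK : IsAdmissibleKernel n s lam Lam K)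
    (q : ℝ) (hq1 : 1 < q)
    (hq2 : 2 * s < (n : ℝ) → q ≤ (n : ℝ) / ((n : ℝ) - 2 * s))
    (u : Euc n → ℝ) (humeas : Measurable u) (hupos : ∀ x, 0 ≤ u x)
    (huloc : MemLqLoc n q u) (hutail : MemL1Tail n s u)
    (hsub : ∀ φ : Euc n → ℝ, IsTestFun n φ → (∀ x, 0 ≤ φ x) →
      (∫ x : Euc n, u x * LK n K φ x) ≤ -∫ x : Euc n, u x ^ q * φ x) :
    ∀ᵐ x : Euc n, u x = 0 := by

  obtain ⟨C, hC, h⟩ := test_ineq n hn s hs lam Lam K hK q u humeas hupos huloc hutail hsub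
  obtain ⟨C', hC', h'⟩ := dyadic_ineq hs.1 humeas hupos huloc hutail hC h
  refine final_step hs.1 hq1 ?_ humeas hupos huloc hutail hC' h'
  have hq' : 0 < q - 1 := by linarith
  have hs0 := hs.1
  rw [← mul_div_assoc, le_div_iff₀ hq']
  by_cases hns : 2 * s < (n : ℝ)
  · have := hq2 hns
    rw [le_div_iff₀ (by linarith)] at this
    linarith
  · push Not at hns
    nlinarith
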